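/- Let d ≥ 2 and r ≥ 0. There exists a constant C, depending only on d and r, such that for every v ∈ ℝ^d: ∫_{ℝ^d} |v − v_*|^{−1} ⟨v_*⟩^r e^{−|v_*|²} dv_* ≤ C ⟨v⟩^{−1}. -/

import Mathlib

/-!
The bracket is 1-Lipschitz, so `⟨v⟩ ≤ ⟨w⟩ + |v - w|`, and multiplying the integrand by `⟨v⟩` gives
at most `|v - w|⁻¹ ⟨w⟩^(r+1) e^{-|w|²} + ⟨w⟩^r e^{-|w|²}`. The weight `⟨w⟩^(r+1) e^{-|w|²}` is at most
`M ⟨w⟩^{-(d+1)}`, which is bounded and integrable. Splitting `|v - w|⁻¹` into its restriction to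
the unit ball around `v` (integrable since `d ≥ 2`) and a remainder bounded by `1` dominates the
integrand by `⟨v⟩⁻¹` times a function whose integral, by translation invariance, is independent
of `v`.
-/

open MeasureTheory

/-- The Japanese bracket `⟨v⟩ = (1 + |v|²)^{1/2}`. -/
noncomputable def jap {d : ℕ} (v : EuclideanSpace ℝ (Fin d)) : ℝ :=
  Real.sqrt (1 + ‖v‖ ^ 2)

lemma jap_le_jap_add_norm_sub {d : ℕ} (v w : EuclideanSpace ℝ (Fin d)) :
    jap v ≤ jap w + ‖v - w‖ := by
  unfold jap
  have hv : ‖v‖ ≤ ‖w‖ + ‖v - w‖ := by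
    have := norm_add_le w (v - w)
    simpa using this
  have hs : ‖w‖ ≤ √(1 + ‖w‖ ^ 2) := Real.le_sqrt_of_sq_le (by linarith)
  have hsq : √(1 + ‖w‖ ^ 2) ^ 2 = 1 + ‖w‖ ^ 2 := Real.sq_sqrt (by positivity)
  refine (Real.sqrt_le_left (by positivity)).2 ?_
  have h0 := norm_nonneg (v - w)
  have h1 : ‖v‖ ^ 2 ≤ (‖w‖ + ‖v - w‖) ^ 2 := by gcongr
  nlinarith [mul_le_mul_of_nonneg_right hs h0]

lemma one_le_jap {d : ℕ} (v : EuclideanSpace ℝ (Fin d)) : 1 ≤ jap v :=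
  Real.one_le_sqrt.2 (by nlinarith [sq_nonneg ‖v‖])

lemma rpow_le_mul_exp {p y : ℝ} (hp : 0 < p) (hy : 0 ≤ y) : y ^ p ≤ p ^ p * Real.exp y := by
  have h : y / p ≤ Real.exp (y / p) := by linarith [Real.add_one_le_exp (y / p)]
  calc y ^ p = p ^ p * (y / p) ^ p := by
        rw [← Real.mul_rpow hp.le (by positivity), mul_div_cancel₀ _ hp.ne']
    _ ≤ p ^ p * Real.exp (y / p) ^ p := by gcongr
    _ = p ^ p * Real.exp y := by rw [← Real.exp_mul, div_mul_cancel₀ _ hp.ne']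

/-- The Gaussian absorbs any power of the bracket, with room for any further polynomial decay. -/
lemma exists_jap_rpow_mul_exp_le (d : ℕ) {s q : ℝ} (hs : 0 ≤ s) (hq : 0 < q) :
    ∃ M : ℝ, 0 ≤ M ∧ ∀ w : EuclideanSpace ℝ (Fin d),
      jap w ^ s * Real.exp (-‖w‖ ^ 2) ≤ M * (1 + ‖w‖ ^ 2) ^ (-q / 2) := by
  refine ⟨((s + q) / 2) ^ ((s + q) / 2) * Real.exp 1, by positivity, fun w => ?_⟩
  have ha : 0 < 1 + ‖w‖ ^ 2 := by positivity
  have h := rpow_le_mul_exp (p := (s + q) / 2) (by positivity) ha.le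
  have hj : jap w ^ s = (1 + ‖w‖ ^ 2) ^ ((s + q) / 2) * (1 + ‖w‖ ^ 2) ^ (-q / 2) := by
    rw [jap, Real.sqrt_eq_rpow, ← Real.rpow_mul ha.le, ← Real.rpow_add ha]
    congr 1; ring
  have he : Real.exp (1 + ‖w‖ ^ 2) * Real.exp (-‖w‖ ^ 2) = Real.exp 1 := by
    rw [← Real.exp_add]; congr 1; ring
  rw [hj, ← he]
  calc _ ≤ (((s + q) / 2) ^ ((s + q) / 2) * Real.exp (1 + ‖w‖ ^ 2)) * (1 + ‖w‖ ^ 2) ^ (-q / 2)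
        * Real.exp (-‖w‖ ^ 2) := by gcongr
    _ = _ := by ring

lemma integrable_indicator_ball_norm_inv {d : ℕ} (hd : 2 ≤ d) :
    Integrable ((Metric.ball (0 : EuclideanSpace ℝ (Fin d)) 1).indicator fun u => ‖u‖⁻¹) := by
  rw [integrable_indicator_iff Metric.isOpen_ball.measurableSet]
  refine integrableOn_ball_of_norm_le_rpow (C := 1) (α := 1) ?_ ?_ ?_ ?_
  · simp; omega
  · simp; omega
  · refine Filter.Eventually.of_forall fun u => ?_
    simp [Real.rpow_neg_one]
  · exact (measurable_norm.inv).aestronglyMeasurable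

/-- **Decay of the convolution of the singular kernel with a weighted Gaussian:**
for `d ≥ 2` and `r ≥ 0` there is a constant `C`, depending only on `d` and `r`,
such that `∫ |v - v_*|⁻¹ ⟨v_*⟩^r e^{-|v_*|²} dv_* ≤ C ⟨v⟩⁻¹` for every `v`. -/
theorem convolution_gaussian_decay (d : ℕ) (hd : 2 ≤ d) (r : ℝ) (hr : 0 ≤ r) :
    ∃ C : ℝ, ∀ v : EuclideanSpace ℝ (Fin d),
      (∫ w : EuclideanSpace ℝ (Fin d), ‖v - w‖⁻¹ * (jap w) ^ r * Real.exp (-‖w‖ ^ 2))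
        ≤ C * (jap v)⁻¹ := by
  obtain ⟨M, hM, hMle⟩ := exists_jap_rpow_mul_exp_le d (s := r + 1) (q := d + 1)
    (by positivity) (by positivity)
  set h : EuclideanSpace ℝ (Fin d) → ℝ := fun w => (1 + ‖w‖ ^ 2) ^ (-((d : ℝ) + 1) / 2) with hh
  set k : EuclideanSpace ℝ (Fin d) → ℝ :=
    (Metric.ball (0 : EuclideanSpace ℝ (Fin d)) 1).indicator fun u => ‖u‖⁻¹ with hk
  have hint : Integrable h := integrable_rpow_neg_one_add_norm_sq (by simp)
  have kint : Integrable k := integrable_indicator_ball_norm_inv hd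
  have h0 : ∀ w, 0 ≤ h w := fun w => by positivity
  have h1 : ∀ w, h w ≤ 1 := fun w =>
    Real.rpow_le_one_of_one_le_of_nonpos (by nlinarith [sq_nonneg ‖w‖])
      (by have : (0 : ℝ) ≤ d := by positivity
          linarith)
  have k0 : ∀ u, 0 ≤ k u := Set.indicator_nonneg fun u _ => by positivity
  have hki : ∀ u, ‖u‖⁻¹ ≤ k u + 1 := fun u => by
    by_cases hu : u ∈ Metric.ball (0 : EuclideanSpace ℝ (Fin d)) 1
    · simp [hk, Set.indicator_of_mem hu]
    · have hu' : 1 ≤ ‖u‖ := by simpa using hu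
      simpa [hk, Set.indicator_of_notMem hu] using inv_le_one_of_one_le₀ hu'
  refine ⟨M * (∫ u, k u) + 2 * M * ∫ w, h w, fun v => ?_⟩
  have kint' : Integrable fun w => k (v - w) := kint.comp_sub_left v
  have hv : 0 < jap v := one_pos.trans_le (one_le_jap v)
  have key : ∀ w, ‖v - w‖⁻¹ * (jap w) ^ r * Real.exp (-‖w‖ ^ 2)
      ≤ (M * k (v - w) + 2 * M * h w) * (jap v)⁻¹ := fun w => by
    have hw := one_le_jap w
    have hw0 : 0 < jap w := by linarith
    set g := jap w ^ r * Real.exp (-‖w‖ ^ 2) with hg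
    have g0 : 0 ≤ g := by positivity
    have hgM : jap w * g ≤ M * h w := by
      refine le_trans (le_of_eq ?_) (hMle w)
      rw [hg, Real.rpow_add_one hw0.ne']; ring
    have hg1 : g ≤ M * h w := le_trans (by nlinarith) hgM
    -- The inequality also holds at `w = v`, where the kernel takes the value `0⁻¹ = 0`.
    have hinv : ‖v - w‖⁻¹ * ‖v - w‖ ≤ 1 := inv_mul_le_one
    rw [← div_eq_mul_inv, le_div_iff₀ hv]
    calc ‖v - w‖⁻¹ * (jap w) ^ r * Real.exp (-‖w‖ ^ 2) * jap v
        = ‖v - w‖⁻¹ * g * jap v := by rw [hg]; ring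
      _ ≤ ‖v - w‖⁻¹ * g * (jap w + ‖v - w‖) := by
          gcongr; exact jap_le_jap_add_norm_sub v w
      _ = ‖v - w‖⁻¹ * (jap w * g) + (‖v - w‖⁻¹ * ‖v - w‖) * g := by ring
      _ ≤ (k (v - w) + 1) * (M * h w) + 1 * (M * h w) := by
          gcongr
          · have := k0 (v - w); positivity
          · exact hki _
      _ = M * (k (v - w) * h w) + 2 * M * h w := by ring
      _ ≤ M * k (v - w) + 2 * M * h w := by
          gcongr
          exact mul_le_of_le_one_right (k0 _) (h1 w)
  calc _ ≤ ∫ w, (M * k (v - w) + 2 * M * h w) * (jap v)⁻¹ := by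
        refine integral_mono_of_nonneg (Filter.Eventually.of_forall fun w => ?_)
          (((kint'.const_mul M).add (hint.const_mul (2 * M))).mul_const _)
          (Filter.Eventually.of_forall key)
        have := one_le_jap w
        simp only [Pi.zero_apply]
        positivity
    _ = _ := by
        rw [integral_mul_const, integral_add (kint'.const_mul M) (hint.const_mul (2 * M)),
          integral_const_mul, integral_const_mul, integral_sub_left_eq_self k volume v]
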